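/- arXiv:2105.09985 — 2 statements merged into one kernel-verified Lean document; each statement's English description precedes it below -/
import Mathlib

section
/- Fix ℓ ∈ {0,1} and suppose that for each b ∈ {0,1}, P(Y | V ∩ V̂ᵇ ∩ L_ℓ) = P(Y | V̂ᵇ ∩ L_ℓ) (i.e., y is conditionally independent of the covariate given the proxy on slice ℓ). Then |P(Y | V ∩ L_ℓ) − P(Y | V̂ ∩ L_ℓ)| ≤ P(V̂ᶜ | V ∩ L_ℓ), i.e., the per-slice estimation error is bounded by the recall error r_ℓ of the proxy on slice ℓ. -/
open MeasureTheory

/-- Conditional probability `P(A | B) = μ(A ∩ B) / μ(B)` as a real number. -/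
noncomputable def condP {Ω : Type*} [MeasurableSpace Ω] (μ : Measure Ω) (A B : Set Ω) : ℝ :=
  (μ (A ∩ B)).toReal / (μ B).toReal

/-- `ev S true = S` (the event `s = 1`) and `ev S false = Sᶜ` (the event `s = 0`). -/
def ev {Ω : Type*} (S : Set Ω) (b : Bool) : Set Ω := bif b then S else Sᶜ

/-!
The covariate slice `A = V ∩ Ll` is split by the proxy `B = Vh`: the law of total probability gives
`P(Y | A) - P(Y | A ∩ B) = P(Bᶜ | A) * (P(Y | A ∩ Bᶜ) - P(Y | A ∩ B))`,
whose last factor is a difference of two numbers in `[0, 1]`. Conditional independence given a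
positive proxy replaces `P(Y | A ∩ B)` by `P(Y | Vh ∩ Ll)`.
-/

section ConditionalProbability

open ProbabilityTheory

variable {Ω : Type*} [MeasurableSpace Ω]

theorem real_sub_cond_real_eq_real_compl_mul (ν : Measure Ω) [IsProbabilityMeasure ν] {B : Set Ω}
    (hB : MeasurableSet B) (Y : Set Ω) :
    ν.real Y - ν[|B].real Y = ν.real Bᶜ * (ν[|Bᶜ].real Y - ν[|B].real Y) := by
  have total : ν[|B].real Y * ν.real B + ν[|Bᶜ].real Y * ν.real Bᶜ = ν.real Y := by
    simp only [measureReal_def, ← ENNReal.toReal_mul]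
    rw [← ENNReal.toReal_add (by finiteness) (by finiteness), cond_add_cond_compl_eq hB]
  linear_combination ν[|B].real Y * probReal_add_probReal_compl (μ := ν) hB - total

theorem abs_real_sub_cond_real_le (ν : Measure Ω) [IsProbabilityMeasure ν] {B : Set Ω}
    (hB : MeasurableSet B) (Y : Set Ω) :
    |ν.real Y - ν[|B].real Y| ≤ ν.real Bᶜ := by
  have abs_diff_le_one : |ν[|Bᶜ].real Y - ν[|B].real Y| ≤ 1 :=
    abs_sub_le_of_nonneg_of_le measureReal_nonneg measureReal_le_one
      measureReal_nonneg measureReal_le_one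
  calc |ν.real Y - ν[|B].real Y|
      = ν.real Bᶜ * |ν[|Bᶜ].real Y - ν[|B].real Y| := by
        rw [real_sub_cond_real_eq_real_compl_mul ν hB, abs_mul, abs_of_nonneg measureReal_nonneg]
    _ ≤ ν.real Bᶜ := mul_le_of_le_one_right measureReal_nonneg abs_diff_le_one

theorem condP_eq_cond_real (μ : Measure Ω) (A : Set Ω) {B : Set Ω} (hB : MeasurableSet B) :
    condP μ A B = μ[|B].real A := by
  rw [condP, measureReal_def, cond_apply hB, ENNReal.toReal_mul, ENNReal.toReal_inv,
    Set.inter_comm, div_eq_inv_mul]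

theorem abs_condP_sub_condP_inter_le (μ : Measure Ω) [IsFiniteMeasure μ] {A B : Set Ω}
    (hA : MeasurableSet A) (hB : MeasurableSet B) (hposA : 0 < μ A) (Y : Set Ω) :
    |condP μ Y A - condP μ Y (A ∩ B)| ≤ condP μ Bᶜ A := by
  have : IsProbabilityMeasure μ[|A] := cond_isProbabilityMeasure hposA.ne'
  rw [condP_eq_cond_real μ Y hA, condP_eq_cond_real μ Y (hA.inter hB),
    condP_eq_cond_real μ Bᶜ hA, ← cond_cond_eq_cond_inter hA hB]
  exact abs_real_sub_cond_real_le μ[|A] hB Y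

end ConditionalProbability

theorem stmt_4_general {Ω : Type*} [MeasurableSpace Ω] (μ : Measure Ω) [IsFiniteMeasure μ]
    (Y : Set Ω) {V Vh Ll : Set Ω}
    (hV : MeasurableSet V) (hVh : MeasurableSet Vh) (hLl : MeasurableSet Ll)
    (hpos : 0 < μ (V ∩ Vh ∩ Ll))
    (hind : condP μ Y (V ∩ Vh ∩ Ll) = condP μ Y (Vh ∩ Ll)) :
    |condP μ Y (V ∩ Ll) - condP μ Y (Vh ∩ Ll)| ≤ condP μ Vhᶜ (V ∩ Ll) := by
  rw [Set.inter_right_comm] at hpos hind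
  have hposVL : 0 < μ (V ∩ Ll) := hpos.trans_le (measure_mono Set.inter_subset_left)
  rw [← hind]
  exact abs_condP_sub_condP_inter_le μ (hV.inter hLl) hVh hposVL Y

/-- On a fixed slice `Ll`, if `Y` is conditionally independent of the covariate given the proxy,
then the per-slice estimation error is bounded by the recall error of the proxy. -/
theorem stmt_4 {Ω : Type*} [MeasurableSpace Ω] (μ : Measure Ω) [IsProbabilityMeasure μ]
    (Y V Vh Ll : Set Ω)
    (hY : MeasurableSet Y) (hV : MeasurableSet V) (hVh : MeasurableSet Vh)
    (hLl : MeasurableSet Ll)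
    (hpos1 : ∀ b : Bool, 0 < μ (V ∩ ev Vh b ∩ Ll))
    (hpos2 : ∀ b : Bool, 0 < μ (ev Vh b ∩ Ll))
    (hposVL : 0 < μ (V ∩ Ll))
    (hposVhL : 0 < μ (Vh ∩ Ll))
    (hind : ∀ b : Bool, condP μ Y (V ∩ ev Vh b ∩ Ll) = condP μ Y (ev Vh b ∩ Ll)) :
    |condP μ Y (V ∩ Ll) - condP μ Y (Vh ∩ Ll)| ≤ condP μ Vhᶜ (V ∩ Ll) :=
  stmt_4_general μ Y hV hVh hLl (hpos1 true) (hind true)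
end

section
/- Fix ℓ ∈ {0,1}, let ε ∈ [0,1], and define δ_ℓ = P(Y | V ∩ L_ℓ) − P(Y | V̂ ∩ L_ℓ). If the diagonals of the confusion matrix are ε-close on slice ℓ, i.e., |P(Y | V ∩ V̂ᶜ ∩ L_ℓ) − P(Y | Vᶜ ∩ V̂ ∩ L_ℓ)| ≤ ε, then |δ_ℓ| ≤ |p_ℓ − r_ℓ| + ε. -/
open MeasureTheory

/-!
Given `A`, split the prediction `Y` according to whether `B` occurs, and given `B`, according to
whether `A` occurs. With `r = P(Bᶜ | A)`, `p = P(Aᶜ | B)`, `m = P(Y | A ∩ B)`,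
`s = P(Y | A ∩ Bᶜ)` and `t = P(Y | Aᶜ ∩ B)`, this gives
`P(Y | A) - P(Y | B) = ((1 - r) m + r s) - ((1 - p) m + p t) = (p - r) (m - t) + r (s - t)`,
and `|m - t|` and `r` are at most `1`. On a slice, one applies this to the measure restricted to it.
-/

section condP

variable {Ω : Type*} [MeasurableSpace Ω] {μ : Measure Ω}

lemma condP_nonneg (A B : Set Ω) : 0 ≤ condP μ A B := by
  unfold condP
  positivity

lemma condP_restrict {L : Set Ω} (hL : MeasurableSet L) (A B : Set Ω) :
    condP (μ.restrict L) A B = condP μ A (B ∩ L) := by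
  simp only [condP, Measure.restrict_apply' hL, Set.inter_assoc]

variable [IsFiniteMeasure μ]

lemma condP_le_one (A B : Set Ω) : condP μ A B ≤ 1 :=
  div_le_one_of_le₀ (measureReal_mono Set.inter_subset_right) measureReal_nonneg

lemma condP_inter_add_condP_inter_compl {B : Set Ω} (hB : MeasurableSet B) (Y A : Set Ω) :
    condP μ (Y ∩ B) A + condP μ (Y ∩ Bᶜ) A = condP μ Y A := by
  have h : μ.real (Y ∩ A ∩ B) + μ.real ((Y ∩ A) \ B) = μ.real (Y ∩ A) :=
    measureReal_inter_add_sdiff hB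
  rw [Set.sdiff_eq, Set.inter_right_comm, Set.inter_right_comm Y A] at h
  simp only [condP, ← measureReal_def, ← add_div, h]

lemma condP_compl {A B : Set Ω} (hB : MeasurableSet B) (hA : μ A ≠ 0) :
    condP μ Bᶜ A = 1 - condP μ B A := by
  have h_univ : condP μ Set.univ A = 1 := by
    rw [condP, Set.univ_inter]
    exact div_self (ENNReal.toReal_ne_zero.2 ⟨hA, measure_ne_top μ A⟩)
  have h_split := condP_inter_add_condP_inter_compl (μ := μ) hB Set.univ A
  simp only [Set.univ_inter] at h_split
  linarith

lemma condP_mul_condP_inter (Y A B : Set Ω) :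
    condP μ B A * condP μ Y (A ∩ B) = condP μ (Y ∩ B) A := by
  have h_null (h : μ.real (B ∩ A) = 0) : μ.real (Y ∩ B ∩ A) = 0 :=
    measureReal_mono_null (by rw [Set.inter_assoc]; exact Set.inter_subset_right) h
  rw [mul_comm, Set.inter_comm A B]
  simp only [condP, ← measureReal_def, ← Set.inter_assoc]
  rw [← mul_div_assoc, div_mul_cancel_of_imp h_null]

lemma condP_eq_mul_inter_add_mul_inter_compl {A B : Set Ω} (hB : MeasurableSet B) (hA : μ A ≠ 0)
    (Y : Set Ω) :
    condP μ Y A =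
      (1 - condP μ Bᶜ A) * condP μ Y (A ∩ B) + condP μ Bᶜ A * condP μ Y (A ∩ Bᶜ) := by
  rw [condP_compl hB hA, sub_sub_cancel, ← condP_compl hB hA, condP_mul_condP_inter,
    condP_mul_condP_inter, condP_inter_add_condP_inter_compl hB]

theorem abs_condP_sub_condP_le_add {A B : Set Ω} (hA : MeasurableSet A) (hB : MeasurableSet B)
    (hA₀ : μ A ≠ 0) (hB₀ : μ B ≠ 0) (Y : Set Ω) :
    |condP μ Y A - condP μ Y B| ≤
      |condP μ Aᶜ B - condP μ Bᶜ A| + |condP μ Y (A ∩ Bᶜ) - condP μ Y (Aᶜ ∩ B)| := by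
  have h_decomp : condP μ Y A - condP μ Y B =
      (condP μ Aᶜ B - condP μ Bᶜ A) * (condP μ Y (A ∩ B) - condP μ Y (Aᶜ ∩ B)) +
        condP μ Bᶜ A * (condP μ Y (A ∩ Bᶜ) - condP μ Y (Aᶜ ∩ B)) := by
    rw [condP_eq_mul_inter_add_mul_inter_compl hB hA₀,
      condP_eq_mul_inter_add_mul_inter_compl hA hB₀, Set.inter_comm B A, Set.inter_comm B Aᶜ]
    ring
  rw [h_decomp]
  refine (abs_add_le _ _).trans (add_le_add ?_ ?_)
  · rw [abs_mul]
    exact mul_le_of_le_one_right (abs_nonneg _) <|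
      abs_sub_le_of_nonneg_of_le (condP_nonneg _ _) (condP_le_one _ _) (condP_nonneg _ _)
        (condP_le_one _ _)
  · rw [abs_mul, abs_of_nonneg (condP_nonneg _ _)]
    exact mul_le_of_le_one_left (abs_nonneg _) (condP_le_one _ _)

end condP

/-- On a fixed slice `Ll`, if the diagonals of the confusion matrix are `ε`-close, then the
per-slice estimation error `δ_ℓ` satisfies `|δ_ℓ| ≤ |p_ℓ - r_ℓ| + ε`. -/
theorem stmt_9 {Ω : Type*} [MeasurableSpace Ω] (μ : Measure Ω) [IsProbabilityMeasure μ]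
    (Y V Vh Ll : Set Ω) (ε : ℝ)
    (hY : MeasurableSet Y) (hV : MeasurableSet V) (hVh : MeasurableSet Vh)
    (hLl : MeasurableSet Ll)
    (hε : ε ∈ Set.Icc (0 : ℝ) 1)
    (hposVL : 0 < μ (V ∩ Ll))
    (hposVhL : 0 < μ (Vh ∩ Ll))
    (hpos10 : 0 < μ (V ∩ Vhᶜ ∩ Ll))
    (hpos01 : 0 < μ (Vᶜ ∩ Vh ∩ Ll))
    (hdiag : |condP μ Y (V ∩ Vhᶜ ∩ Ll) - condP μ Y (Vᶜ ∩ Vh ∩ Ll)| ≤ ε) :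
    |condP μ Y (V ∩ Ll) - condP μ Y (Vh ∩ Ll)|
      ≤ |condP μ Vᶜ (Vh ∩ Ll) - condP μ Vhᶜ (V ∩ Ll)| + ε := by
  simp only [← condP_restrict hLl] at hdiag ⊢
  have hV₀ : μ.restrict Ll V ≠ 0 := by rw [Measure.restrict_apply hV]; exact hposVL.ne'
  have hVh₀ : μ.restrict Ll Vh ≠ 0 := by rw [Measure.restrict_apply hVh]; exact hposVhL.ne'
  exact (abs_condP_sub_condP_le_add hV hVh hV₀ hVh₀ Y).trans (add_le_add_right hdiag _)
end
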